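/- Let n ≥ 1 be an integer, and let L ⊆ ₀S_n² be a ℂ-linear subspace that is closed with respect to the norm ‖·‖_{S_n²} and invariant under multiplication by z (for every f ∈ L the function z ↦ z f(z) lies in L). Then L = I ∩ ₀S_n² for some ℂ-linear subspace I ⊆ S_n² that is closed with respect to ‖·‖_{S_n²} and is an ideal of the algebra S_n². Conversely, for any such closed ideal I of S_n², the set I ∩ ₀S_n² is a closed subspace of ₀S_n² invariant under multiplication by z. -/

import Mathlib

/-!
The space `S_n²` is a weighted `ℓ²` space of Taylor coefficients: `f ∈ S_n²` if and only if
`∑ ((k+1)^n |a_k|)² < ∞` (`MemS.summable_wt`, `memS_of_summable_wt`), because the coefficients of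
`f^{(n)}` are `(k+1)⋯(k+n) a_{k+n}`, and `(k+1)⋯(k+n)` is comparable to `(k+n+1)^n`.

For `n ≥ 1` the weights `w_k = (k+1)^n` satisfy `w_{i+j} ≤ (1/(i+1) + 1/(j+1)) w_i w_j`
(`weight_le`). Cauchy–Schwarz on each antidiagonal and `∑ 1/(k+1)² < ∞` then make multiplication
continuous on `S_n²` (`wt_mul`). Taylor polynomials are dense (`tendsto_wt_taylorPoly`), so a closed
`z`-invariant subspace `L` of `₀S_n²` absorbs multiplication by every `h ∈ S_n²`
(`mul_mem_of_shift_invariant`). Hence `L` is itself a closed ideal of `S_n²`, and `I = L` works.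

Conversely, `₀S_n²` is closed since Taylor coefficients are continuous (`isClosedInS_mem0S`), and
it is stable under multiplication by `z`, which lies in `S_n²`; an ideal absorbs `z` as well.
-/

open Metric Filter

/-- Taylor coefficient `a_k(f) = f^{(k)}(0)/k!`. -/
noncomputable def hardyCoeff (f : ℂ → ℂ) (k : ℕ) : ℂ :=
  iteratedDeriv k f 0 / (Nat.factorial k)

/-- `f ∈ H²`: analytic on the open unit disk with square-summable Taylor coefficients. -/
def MemH2 (f : ℂ → ℂ) : Prop :=
  AnalyticOnNhd ℂ f (ball (0 : ℂ) 1) ∧ Summable fun k => ‖hardyCoeff f k‖ ^ 2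

/-- The Hardy space norm `‖f‖_{H²}`. -/
noncomputable def normH2 (f : ℂ → ℂ) : ℝ :=
  Real.sqrt (∑' k, ‖hardyCoeff f k‖ ^ 2)

/-- `f ∈ S_n²`: `f ∈ H²` and `f^{(n)} ∈ H²`. -/
def MemS (n : ℕ) (f : ℂ → ℂ) : Prop :=
  MemH2 f ∧ MemH2 (iteratedDeriv n f)

/-- The norm `‖f‖_{S_n²} = (‖f^{(n)}‖² + ‖f‖²)^{1/2}`. -/
noncomputable def normS (n : ℕ) (f : ℂ → ℂ) : ℝ :=
  Real.sqrt (normH2 (iteratedDeriv n f) ^ 2 + normH2 f ^ 2)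

/-- `f ∈ ₀S_n²`: `f ∈ S_n²` with `f^{(i)}(0) = 0` for `0 ≤ i ≤ n-1`. -/
def Mem0S (n : ℕ) (f : ℂ → ℂ) : Prop :=
  MemS n f ∧ ∀ i < n, iteratedDeriv i f 0 = 0

/-- Complex Riemann–Liouville integral `V_n`. -/
noncomputable def Vn (n : ℕ) (f : ℂ → ℂ) (z : ℂ) : ℂ :=
  z ^ n / (Nat.factorial (n - 1)) *
    ∫ t in (0:ℝ)..1, ((1 - t : ℝ) : ℂ) ^ (n - 1) * f ((t : ℂ) * z)

/-- The operator `T_n f = z f(z) + n ∫₀^z f(w) dw`. -/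
noncomputable def Tn (n : ℕ) (f : ℂ → ℂ) (z : ℂ) : ℂ :=
  z * f z + n * (z * ∫ t in (0:ℝ)..1, f ((t : ℂ) * z))

/-- `L` is a ℂ-linear subspace of functions (contains 0, closed under addition
and scalar multiplication). -/
def IsLinSubspace (L : Set (ℂ → ℂ)) : Prop :=
  (fun _ => (0 : ℂ)) ∈ L ∧
  (∀ f ∈ L, ∀ g ∈ L, (fun z => f z + g z) ∈ L) ∧
  (∀ c : ℂ, ∀ f ∈ L, (fun z => c * f z) ∈ L)

/-- `L` is closed in `S_n²` with respect to the norm `‖·‖_{S_n²}`. -/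
def IsClosedInS (n : ℕ) (L : Set (ℂ → ℂ)) : Prop :=
  ∀ (g : ℕ → ℂ → ℂ) (f : ℂ → ℂ), (∀ l, g l ∈ L) → MemS n f →
    Filter.Tendsto (fun l => normS n (fun z => g l z - f z)) Filter.atTop (nhds 0) → f ∈ L

/-- `S` is closed in `H²` with respect to the norm `‖·‖_{H²}`. -/
def IsClosedInH2 (S : Set (ℂ → ℂ)) : Prop :=
  ∀ (g : ℕ → ℂ → ℂ) (f : ℂ → ℂ), (∀ l, g l ∈ S) → MemH2 f →
    Filter.Tendsto (fun l => normH2 (fun z => g l z - f z)) Filter.atTop (nhds 0) → f ∈ S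

/-- `I` is a closed ideal of the algebra `S_n²`: a ℂ-linear subspace of `S_n²`, closed in
the norm `‖·‖_{S_n²}`, absorbing multiplication by elements of `S_n²`. -/
def IsClosedIdealOfS (n : ℕ) (I : Set (ℂ → ℂ)) : Prop :=
  I ⊆ {f | MemS n f} ∧ IsLinSubspace I ∧ IsClosedInS n I ∧
  ∀ h : ℂ → ℂ, MemS n h → ∀ f ∈ I, (fun z => h z * f z) ∈ I

open Finset in
lemma hardyCoeff_mul {f g : ℂ → ℂ} (hf : AnalyticOnNhd ℂ f (ball (0 : ℂ) 1))
    (hg : AnalyticOnNhd ℂ g (ball (0 : ℂ) 1)) (k : ℕ) :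
    hardyCoeff (fun z => f z * g z) k =
      ∑ p ∈ antidiagonal k, hardyCoeff f p.1 * hardyCoeff g p.2 := by
  have hf' := (hf 0 (by simp)).contDiffAt (n := k)
  have hg' := (hg 0 (by simp)).contDiffAt (n := k)
  rw [Nat.sum_antidiagonal_eq_sum_range_succ (fun i j => hardyCoeff f i * hardyCoeff g j)]
  unfold hardyCoeff
  rw [iteratedDeriv_fun_mul hf' hg', Finset.sum_div]
  refine Finset.sum_congr rfl fun i hi => ?_
  have hik : i ≤ k := by simpa [Nat.lt_succ_iff] using hi
  have h := Nat.choose_mul_factorial_mul_factorial hik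
  have h' : (k.choose i : ℂ) * i.factorial * (k - i).factorial = k.factorial := by
    exact_mod_cast h
  have h1 : (i.factorial : ℂ) ≠ 0 := by exact_mod_cast i.factorial_ne_zero
  have h2 : ((k - i).factorial : ℂ) ≠ 0 := by exact_mod_cast (k - i).factorial_ne_zero
  have h3 : (k.factorial : ℂ) ≠ 0 := by exact_mod_cast k.factorial_ne_zero
  field_simp
  rw [← h']
  ring

lemma hardyCoeff_sub {f g : ℂ → ℂ} (hf : AnalyticOnNhd ℂ f (ball (0 : ℂ) 1))
    (hg : AnalyticOnNhd ℂ g (ball (0 : ℂ) 1)) (k : ℕ) :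
    hardyCoeff (fun z => f z - g z) k = hardyCoeff f k - hardyCoeff g k := by
  have hf' := (hf 0 (by simp)).contDiffAt (n := k)
  have hg' := (hg 0 (by simp)).contDiffAt (n := k)
  unfold hardyCoeff
  rw [iteratedDeriv_fun_sub hf' hg', sub_div]

/-- The coefficient of `f^{(n)}` at `k` is `(k+1)(k+2)⋯(k+n)` times that of `f` at `k + n`. -/
lemma hardyCoeff_iteratedDeriv (n : ℕ) (f : ℂ → ℂ) (k : ℕ) :
    hardyCoeff (iteratedDeriv n f) k = ((k + 1).ascFactorial n : ℂ) * hardyCoeff f (k + n) := by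
  have h : iteratedDeriv k (iteratedDeriv n f) = iteratedDeriv (k + n) f := by
    simp [iteratedDeriv_eq_iterate, Function.iterate_add_apply]
  have h' : (k.factorial : ℂ) * (k + 1).ascFactorial n = (k + n).factorial := by
    exact_mod_cast Nat.factorial_mul_ascFactorial k n
  have h1 : (k.factorial : ℂ) ≠ 0 := by exact_mod_cast k.factorial_ne_zero
  have h2 : ((k + n).factorial : ℂ) ≠ 0 := by exact_mod_cast (k + n).factorial_ne_zero
  unfold hardyCoeff
  rw [h]
  field_simp
  rw [← h']
  ring

/-- The truncation `∑_{i<l} a_i z^i` of the Taylor series of `h` at `0`. -/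
noncomputable def taylorPoly (h : ℂ → ℂ) (l : ℕ) (z : ℂ) : ℂ :=
  ∑ i ∈ Finset.range l, hardyCoeff h i * z ^ i

lemma analytic_taylorPoly (h : ℂ → ℂ) (l : ℕ) :
    AnalyticOnNhd ℂ (taylorPoly h l) (ball (0 : ℂ) 1) := by
  intro x _
  unfold taylorPoly
  fun_prop

lemma hardyCoeff_taylorPoly (h : ℂ → ℂ) (l k : ℕ) :
    hardyCoeff (taylorPoly h l) k = if k < l then hardyCoeff h k else 0 := by
  have h3 : (k.factorial : ℂ) ≠ 0 := by exact_mod_cast k.factorial_ne_zero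
  have key : iteratedDeriv k (taylorPoly h l) 0 =
      ∑ i ∈ Finset.range l, iteratedDeriv k (fun z : ℂ => hardyCoeff h i * z ^ i) 0 := by
    unfold taylorPoly
    rw [iteratedDeriv_fun_sum]
    intro i _
    fun_prop
  rw [hardyCoeff, key]
  simp only [iteratedDeriv_const_mul_field, iteratedDeriv_fun_pow_zero]
  by_cases hk : k < l <;> simp [hk, h3]

/-- The `k`-th term `((k+1)^n |a_k|)²` of the weighted `ℓ²` norm describing `S_n²`. -/
noncomputable def wt (n : ℕ) (f : ℂ → ℂ) (k : ℕ) : ℝ :=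
  (((k : ℝ) + 1) ^ n * ‖hardyCoeff f k‖) ^ 2

lemma wt_nonneg (n : ℕ) (f : ℂ → ℂ) (k : ℕ) : 0 ≤ wt n f k := sq_nonneg _

lemma sq_coeff_le_wt (n : ℕ) (f : ℂ → ℂ) (k : ℕ) : ‖hardyCoeff f k‖ ^ 2 ≤ wt n f k := by
  unfold wt
  gcongr
  have : (1 : ℝ) ≤ ((k : ℝ) + 1) ^ n := one_le_pow₀ (by linarith [k.cast_nonneg (α := ℝ)])
  nlinarith [norm_nonneg (hardyCoeff f k)]

lemma sq_coeff_iteratedDeriv_le_wt (n : ℕ) (f : ℂ → ℂ) (k : ℕ) :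
    ‖hardyCoeff (iteratedDeriv n f) k‖ ^ 2 ≤ wt n f (k + n) := by
  unfold wt
  rw [hardyCoeff_iteratedDeriv, norm_mul, Complex.norm_natCast]
  gcongr
  have h : (k + 1).ascFactorial n ≤ (k + n + 1) ^ n :=
    (Nat.ascFactorial_le_pow_add k n).trans (Nat.pow_le_pow_left (by omega) n)
  exact_mod_cast h

lemma wt_shift_le (n : ℕ) (f : ℂ → ℂ) (k : ℕ) :
    wt n f (k + n) ≤ (((n : ℝ) + 1) ^ n) ^ 2 * ‖hardyCoeff (iteratedDeriv n f) k‖ ^ 2 := by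
  unfold wt
  rw [hardyCoeff_iteratedDeriv, norm_mul, Complex.norm_natCast, ← mul_pow, ← mul_assoc]
  gcongr
  have h : (k + n + 1) ^ n ≤ (n + 1) ^ n * (k + 1).ascFactorial n := by
    calc (k + n + 1) ^ n ≤ ((n + 1) * (k + 1)) ^ n :=
          Nat.pow_le_pow_left (by nlinarith) n
      _ = (n + 1) ^ n * (k + 1) ^ n := mul_pow _ _ _
      _ ≤ _ := Nat.mul_le_mul_left _ (Nat.pow_succ_le_ascFactorial _ _)
  exact_mod_cast h

lemma MemS.summable_wt {n : ℕ} {f : ℂ → ℂ} (hf : MemS n f) : Summable (wt n f) := by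
  rw [← summable_nat_add_iff n]
  exact Summable.of_nonneg_of_le (fun k => wt_nonneg _ _ _) (wt_shift_le n f)
    (hf.2.2.mul_left _)

lemma memS_of_summable_wt {n : ℕ} {f : ℂ → ℂ} (hf : AnalyticOnNhd ℂ f (ball (0 : ℂ) 1))
    (hs : Summable (wt n f)) : MemS n f := by
  refine ⟨⟨hf, Summable.of_nonneg_of_le (fun k => sq_nonneg _) (sq_coeff_le_wt n f) hs⟩, ?_, ?_⟩
  · rw [iteratedDeriv_eq_iterate]
    exact hf.iterated_deriv n
  · exact Summable.of_nonneg_of_le (fun k => sq_nonneg _) (sq_coeff_iteratedDeriv_le_wt n f)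
      ((summable_nat_add_iff n).2 hs)

lemma normS_sq_le {n : ℕ} {f : ℂ → ℂ} (hs : Summable (wt n f)) :
    normS n f ^ 2 ≤ 2 * ∑' k, wt n f k := by
  have hs' := (summable_nat_add_iff n).2 hs
  have h1 : ∑' k, ‖hardyCoeff f k‖ ^ 2 ≤ ∑' k, wt n f k :=
    (Summable.of_nonneg_of_le (fun k => sq_nonneg _) (sq_coeff_le_wt n f) hs).tsum_le_tsum
      (sq_coeff_le_wt n f) hs
  have h2 : ∑' k, ‖hardyCoeff (iteratedDeriv n f) k‖ ^ 2 ≤ ∑' k, wt n f (k + n) :=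
    (Summable.of_nonneg_of_le (fun k => sq_nonneg _)
      (sq_coeff_iteratedDeriv_le_wt n f) hs').tsum_le_tsum (sq_coeff_iteratedDeriv_le_wt n f) hs'
  have h3 : ∑' k, wt n f (k + n) ≤ ∑' k, wt n f k := by
    rw [← hs.sum_add_tsum_nat_add n]
    exact le_add_of_nonneg_left (Finset.sum_nonneg fun k _ => wt_nonneg _ _ _)
  unfold normS normH2
  rw [Real.sq_sqrt (by positivity), Real.sq_sqrt (tsum_nonneg fun k => sq_nonneg _),
    Real.sq_sqrt (tsum_nonneg fun k => sq_nonneg _)]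
  linarith

/-- The sum `∑ 1/(k+1)²`. -/
noncomputable def invSqSum : ℝ := ∑' k : ℕ, (1 / ((k : ℝ) + 1)) ^ 2

lemma summable_invSq : Summable fun k : ℕ => (1 / ((k : ℝ) + 1)) ^ 2 := by
  have h := (summable_nat_add_iff 1).2 (Real.summable_one_div_nat_pow (p := 2).2 (by norm_num))
  refine h.congr fun k => ?_
  push_cast
  rw [div_pow, one_pow]

/-- With `w_k = (k+1)^n` and `n ≥ 1`, the ratio `w_{i+j} / (w_i w_j)` is at most
`1/(i+1) + 1/(j+1)`: the base `(i+j+1)/((i+1)(j+1))` is at most `1`, so its `n`-th power is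
largest for `n = 1`, where the ratio is at most `(i+j+2)/((i+1)(j+1))`. -/
lemma weight_le {n : ℕ} (hn : 1 ≤ n) (i j : ℕ) :
    ((i : ℝ) + j + 1) ^ n ≤
      (1 / ((i : ℝ) + 1) + 1 / ((j : ℝ) + 1)) * (((i : ℝ) + 1) ^ n * ((j : ℝ) + 1) ^ n) := by
  have hi : (0 : ℝ) ≤ i := i.cast_nonneg
  have hj : (0 : ℝ) ≤ j := j.cast_nonneg
  obtain ⟨m, rfl⟩ := Nat.exists_eq_add_of_le' hn
  have h1 : ((i : ℝ) + j + 1) ^ m ≤ (((i : ℝ) + 1) * (j + 1)) ^ m := by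
    gcongr
    nlinarith
  have h2 : (1 / ((i : ℝ) + 1) + 1 / ((j : ℝ) + 1)) * (((i : ℝ) + 1) ^ (m + 1) *
      ((j : ℝ) + 1) ^ (m + 1)) = (((i : ℝ) + 1) * (j + 1)) ^ m * (i + j + 2) := by
    rw [mul_pow]
    field_simp
    ring
  rw [h2, pow_succ]
  gcongr
  norm_num

open Finset in
/-- Cauchy–Schwarz on each antidiagonal: the weighted coefficients of a product are controlled
by the Cauchy product of the weighted coefficients of the factors. -/
lemma wt_mul_le {n : ℕ} (hn : 1 ≤ n) {f g : ℂ → ℂ} (hf : AnalyticOnNhd ℂ f (ball (0 : ℂ) 1))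
    (hg : AnalyticOnNhd ℂ g (ball (0 : ℂ) 1)) (k : ℕ) :
    wt n (fun z => f z * g z) k ≤
      (4 * invSqSum) * ∑ p ∈ antidiagonal k, wt n f p.1 * wt n g p.2 := by
  have h1 : ((k : ℝ) + 1) ^ n * ‖hardyCoeff (fun z => f z * g z) k‖ ≤
      ∑ p ∈ antidiagonal k, (1 / ((p.1 : ℝ) + 1) + 1 / ((p.2 : ℝ) + 1)) *
        ((((p.1 : ℝ) + 1) ^ n * ‖hardyCoeff f p.1‖) *
          (((p.2 : ℝ) + 1) ^ n * ‖hardyCoeff g p.2‖)) := by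
    rw [hardyCoeff_mul hf hg]
    calc _ ≤ ((k : ℝ) + 1) ^ n * ∑ p ∈ antidiagonal k, ‖hardyCoeff f p.1‖ * ‖hardyCoeff g p.2‖ := by
          gcongr
          refine (norm_sum_le _ _).trans (le_of_eq ?_)
          simp
      _ ≤ _ := by
          rw [mul_sum]
          refine sum_le_sum fun p hp => ?_
          have hk : (k : ℝ) = p.1 + p.2 := by
            exact_mod_cast (mem_antidiagonal.1 hp).symm
          rw [hk]
          have := mul_le_mul_of_nonneg_right (weight_le hn p.1 p.2)
            (mul_nonneg (norm_nonneg (hardyCoeff f p.1)) (norm_nonneg (hardyCoeff g p.2)))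
          refine this.trans (le_of_eq ?_)
          ring
  have h2 : ∑ p ∈ antidiagonal k, (1 / ((p.1 : ℝ) + 1) + 1 / ((p.2 : ℝ) + 1)) ^ 2 ≤
      4 * invSqSum := by
    have ha : ∑ i ∈ range (k + 1), (1 / ((i : ℝ) + 1)) ^ 2 ≤ invSqSum :=
      summable_invSq.sum_le_tsum _ fun _ _ => sq_nonneg _
    have hl : ∑ p ∈ antidiagonal k, (1 / ((p.1 : ℝ) + 1)) ^ 2 ≤ invSqSum := by
      rwa [Nat.sum_antidiagonal_eq_sum_range_succ (fun i _ => (1 / ((i : ℝ) + 1)) ^ 2)]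
    have hr : ∑ p ∈ antidiagonal k, (1 / ((p.2 : ℝ) + 1)) ^ 2 ≤ invSqSum := by
      rw [← Nat.sum_antidiagonal_swap]
      exact hl
    calc _ ≤ ∑ p ∈ antidiagonal k, (2 * (1 / ((p.1 : ℝ) + 1)) ^ 2 +
            2 * (1 / ((p.2 : ℝ) + 1)) ^ 2) := by
          refine sum_le_sum fun p _ => ?_
          nlinarith [sq_nonneg (1 / ((p.1 : ℝ) + 1) - 1 / ((p.2 : ℝ) + 1))]
      _ = 2 * ∑ p ∈ antidiagonal k, (1 / ((p.1 : ℝ) + 1)) ^ 2 +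
            2 * ∑ p ∈ antidiagonal k, (1 / ((p.2 : ℝ) + 1)) ^ 2 := by
          rw [sum_add_distrib, mul_sum, mul_sum]
      _ ≤ _ := by linarith
  calc wt n (fun z => f z * g z) k ≤ _ := by
        unfold wt
        exact pow_le_pow_left₀ (by positivity) h1 2
    _ ≤ _ := sum_mul_sq_le_sq_mul_sq _ _ _
    _ ≤ (4 * invSqSum) * _ := by
        gcongr
    _ = _ := by
        congr 1
        refine sum_congr rfl fun p _ => ?_
        unfold wt
        ring

/-- `S_n²` is an algebra, with a submultiplicative (up to a constant) weighted norm. -/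
lemma wt_mul {n : ℕ} (hn : 1 ≤ n) {f g : ℂ → ℂ} (hf : AnalyticOnNhd ℂ f (ball (0 : ℂ) 1))
    (hg : AnalyticOnNhd ℂ g (ball (0 : ℂ) 1)) (hsf : Summable (wt n f))
    (hsg : Summable (wt n g)) :
    Summable (wt n (fun z => f z * g z)) ∧
      ∑' k, wt n (fun z => f z * g z) k ≤ (4 * invSqSum) * ((∑' k, wt n f k) * ∑' k, wt n g k) := by
  have hp := hsf.mul_of_nonneg hsg (wt_nonneg n f) (wt_nonneg n g)
  have hd := (summable_sum_mul_antidiagonal_of_summable_mul hp).mul_left (4 * invSqSum)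
  have hs := Summable.of_nonneg_of_le (wt_nonneg n _) (wt_mul_le hn hf hg) hd
  refine ⟨hs, ?_⟩
  rw [hsf.tsum_mul_tsum_eq_tsum_sum_antidiagonal hsg hp, ← tsum_mul_left]
  exact hs.tsum_le_tsum (wt_mul_le hn hf hg) hd

lemma wt_taylorPoly_sub {n : ℕ} {h : ℂ → ℂ} (hh : AnalyticOnNhd ℂ h (ball (0 : ℂ) 1)) (l k : ℕ) :
    wt n (fun z => taylorPoly h l z - h z) k = if k < l then 0 else wt n h k := by
  unfold wt
  rw [hardyCoeff_sub (analytic_taylorPoly h l) hh, hardyCoeff_taylorPoly]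
  split_ifs <;> simp

/-- Taylor polynomials converge to `h` in the weighted norm, so polynomials are dense. -/
lemma tendsto_wt_taylorPoly {n : ℕ} {h : ℂ → ℂ} (hh : AnalyticOnNhd ℂ h (ball (0 : ℂ) 1))
    (hs : Summable (wt n h)) :
    Tendsto (fun l => ∑' k, wt n (fun z => taylorPoly h l z - h z) k) atTop (nhds 0) := by
  have : Tendsto (fun l => ∑' k, wt n (fun z => taylorPoly h l z - h z) k) atTop
      (nhds (∑' _ : ℕ, (0 : ℝ))) := by
    refine tendsto_tsum_of_dominated_convergence (bound := wt n h) hs (fun k => ?_)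
      (Eventually.of_forall fun l k => ?_)
    · refine tendsto_const_nhds.congr' ?_
      filter_upwards [eventually_gt_atTop k] with l hl
      rw [wt_taylorPoly_sub hh, if_pos hl]
    · rw [wt_taylorPoly_sub hh]
      split_ifs
      · simpa using wt_nonneg n h k
      · rw [Real.norm_of_nonneg (wt_nonneg n h k)]
  simpa using this

/-- A closed `z`-invariant subspace absorbs multiplication by all of `S_n²`: it absorbs
polynomials, and these are dense. -/
lemma mul_mem_of_shift_invariant {n : ℕ} (hn : 1 ≤ n) {L : Set (ℂ → ℂ)}
    (hL : L ⊆ {f | MemS n f}) (hlin : IsLinSubspace L) (hcl : IsClosedInS n L)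
    (hz : ∀ f ∈ L, (fun z => z * f z) ∈ L) {h f : ℂ → ℂ} (hh : MemS n h) (hf : f ∈ L) :
    (fun z => h z * f z) ∈ L := by
  have hfS : MemS n f := hL hf
  have hpow : ∀ i : ℕ, (fun z => z ^ i * f z) ∈ L := by
    intro i
    induction i with
    | zero => simpa using hf
    | succ i ih =>
      have := hz _ ih
      simpa only [pow_succ', mul_assoc] using this
  have hpoly : ∀ l : ℕ, (fun z => taylorPoly h l z * f z) ∈ L := by
    intro l
    induction l with
    | zero => simpa [taylorPoly] using hlin.1
    | succ l ih =>
      have := hlin.2.1 _ ih _ (hlin.2.2 (hardyCoeff h l) _ (hpow l))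
      simpa only [taylorPoly, Finset.sum_range_succ, add_mul, mul_assoc] using this
  have hhA := hh.1.1
  have hfA := hfS.1.1
  have hhs := hh.summable_wt
  have hfs := hfS.summable_wt
  refine hcl _ _ hpoly (memS_of_summable_wt (hhA.mul hfA) (wt_mul hn hhA hfA hhs hfs).1) ?_
  have hbound : ∀ l, normS n (fun z => taylorPoly h l z * f z - h z * f z) ^ 2 ≤
      2 * ((4 * invSqSum) * ((∑' k, wt n (fun z => taylorPoly h l z - h z) k) *
        ∑' k, wt n f k)) := by
    intro l
    have hdA : AnalyticOnNhd ℂ (fun z => taylorPoly h l z - h z) (ball (0 : ℂ) 1) :=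
      (analytic_taylorPoly h l).sub hhA
    have hds : Summable (wt n (fun z => taylorPoly h l z - h z)) := by
      refine Summable.of_nonneg_of_le (wt_nonneg n _) (fun k => ?_) hhs
      rw [wt_taylorPoly_sub hhA]
      split_ifs
      · exact wt_nonneg n h k
      · exact le_rfl
    have hm := wt_mul hn hdA hfA hds hfs
    simp only [sub_mul] at hm
    exact (normS_sq_le hm.1).trans (mul_le_mul_of_nonneg_left hm.2 (by norm_num))
  have hlim : Tendsto (fun l => normS n (fun z => taylorPoly h l z * f z - h z * f z) ^ 2)
      atTop (nhds 0) := by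
    refine squeeze_zero (fun l => sq_nonneg _) hbound ?_
    have := (((tendsto_wt_taylorPoly hhA hhs).mul_const (∑' k, wt n f k)).const_mul
      (4 * invSqSum)).const_mul 2
    simpa using this
  have hsqrt := hlim.sqrt
  simpa [Real.sqrt_sq (Real.sqrt_nonneg _), normS] using hsqrt

lemma memS_id (n : ℕ) : MemS n (fun z => z) := by
  refine memS_of_summable_wt (fun x _ => analyticAt_id) ?_
  refine summable_of_ne_finset_zero (s := {1}) fun k hk => ?_
  have hk' : k ≠ 1 := by simpa using hk
  have h := iteratedDeriv_fun_pow_zero (𝕜 := ℂ) (n := k) (m := 1)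
  simp only [pow_one] at h
  simp [wt, hardyCoeff, h, hk']

/-- Each Taylor coefficient is a continuous functional on `S_n²`. -/
lemma norm_hardyCoeff_le_normS {n : ℕ} {f : ℂ → ℂ} (hf : Summable fun k => ‖hardyCoeff f k‖ ^ 2)
    (i : ℕ) : ‖hardyCoeff f i‖ ≤ normS n f := by
  have h1 : ‖hardyCoeff f i‖ ^ 2 ≤ ∑' k, ‖hardyCoeff f k‖ ^ 2 :=
    hf.le_tsum i fun _ _ => sq_nonneg _
  refine Real.le_sqrt_of_sq_le ?_
  rw [normH2, normH2, Real.sq_sqrt (tsum_nonneg fun k => sq_nonneg _),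
    Real.sq_sqrt (tsum_nonneg fun k => sq_nonneg _)]
  have : 0 ≤ ∑' k, ‖hardyCoeff (iteratedDeriv n f) k‖ ^ 2 := tsum_nonneg fun k => sq_nonneg _
  linarith

lemma iteratedDeriv_eq_zero_iff (f : ℂ → ℂ) (i : ℕ) :
    iteratedDeriv i f 0 = 0 ↔ hardyCoeff f i = 0 := by
  have h3 : (i.factorial : ℂ) ≠ 0 := by exact_mod_cast i.factorial_ne_zero
  simp [hardyCoeff, h3]

lemma isClosedInS_mem0S (n : ℕ) : IsClosedInS n {f | Mem0S n f} := by
  intro g f hg hf ht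
  refine ⟨hf, fun i hi => ?_⟩
  rw [iteratedDeriv_eq_zero_iff, ← norm_eq_zero]
  refine le_antisymm (ge_of_tendsto' ht fun l => ?_) (norm_nonneg _)
  have hgl : Mem0S n (g l) := hg l
  have hsub := hardyCoeff_sub hgl.1.1.1 hf.1.1
  have hs : Summable fun k => ‖hardyCoeff (fun z => g l z - f z) k‖ ^ 2 := by
    refine Summable.of_nonneg_of_le (fun _ => sq_nonneg _) (fun k => ?_)
      ((hgl.1.1.2.mul_left 2).add (hf.1.2.mul_left 2))
    rw [hsub]
    have := norm_sub_le (hardyCoeff (g l) k) (hardyCoeff f k)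
    nlinarith [norm_nonneg (hardyCoeff (g l) k - hardyCoeff f k),
      sq_nonneg (‖hardyCoeff (g l) k‖ - ‖hardyCoeff f k‖)]
  have h := norm_hardyCoeff_le_normS (n := n) hs i
  rw [hsub, (iteratedDeriv_eq_zero_iff _ _).1 (hgl.2 i hi), zero_sub, norm_neg] at h
  exact h

/-- Every closed `z`-invariant subspace `L` of `₀S_n²` has the form
`L = I ∩ ₀S_n²` for a closed ideal `I` of `S_n²`; conversely `I ∩ ₀S_n²` is a closed
`z`-invariant subspace of `₀S_n²` for every closed ideal `I` of `S_n²`. -/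
theorem stmt15 (n : ℕ) (hn : 1 ≤ n) :
    (∀ L : Set (ℂ → ℂ), L ⊆ {f | Mem0S n f} → IsLinSubspace L → IsClosedInS n L →
      (∀ f ∈ L, (fun z => z * f z) ∈ L) →
      ∃ I : Set (ℂ → ℂ), IsClosedIdealOfS n I ∧ L = I ∩ {f | Mem0S n f}) ∧
    (∀ I : Set (ℂ → ℂ), IsClosedIdealOfS n I →
      (I ∩ {f | Mem0S n f}) ⊆ {f | Mem0S n f} ∧
      IsLinSubspace (I ∩ {f | Mem0S n f}) ∧
      IsClosedInS n (I ∩ {f | Mem0S n f}) ∧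
      ∀ f ∈ I ∩ {f | Mem0S n f}, (fun z => z * f z) ∈ I ∩ {f | Mem0S n f}) := by
  have hcoef : ∀ f, Mem0S n f → ∀ i < n, hardyCoeff f i = 0 := fun f hf i hi =>
    (iteratedDeriv_eq_zero_iff f i).1 (hf.2 i hi)
  refine ⟨fun L hL hlin hcl hz => ?_, fun I hI => ?_⟩
  · have hLS : L ⊆ {f | MemS n f} := fun f hf => (hL hf).1
    exact ⟨L, ⟨hLS, hlin, hcl, fun h hh f hf =>
      mul_mem_of_shift_invariant hn hLS hlin hcl hz hh hf⟩, (Set.inter_eq_left.2 hL).symm⟩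
  · obtain ⟨hIS, hlin, hcl, hmul⟩ := hI
    refine ⟨Set.inter_subset_right, ⟨⟨hlin.1, hIS hlin.1, fun i _ => ?_⟩, ?_, ?_⟩, ?_, ?_⟩
    · simp
    · rintro f ⟨hf, hf0⟩ g ⟨hg, hg0⟩
      have hfg := hlin.2.1 f hf g hg
      refine ⟨hfg, hIS hfg, fun i hi => ?_⟩
      rw [iteratedDeriv_fun_add ((hf0.1.1.1 0 (by simp)).contDiffAt)
        ((hg0.1.1.1 0 (by simp)).contDiffAt), hf0.2 i hi, hg0.2 i hi, add_zero]
    · rintro c f ⟨hf, hf0⟩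
      have hcf := hlin.2.2 c f hf
      refine ⟨hcf, hIS hcf, fun i hi => ?_⟩
      rw [iteratedDeriv_const_mul_field, hf0.2 i hi, mul_zero]
    · intro g f hg hf ht
      exact ⟨hcl g f (fun l => (hg l).1) hf ht,
        isClosedInS_mem0S n g f (fun l => (hg l).2) hf ht⟩
    · rintro f ⟨hf, hf0⟩
      have hzf := hmul _ (memS_id n) f hf
      refine ⟨hzf, hIS hzf, fun i hi => ?_⟩
      rw [iteratedDeriv_eq_zero_iff, hardyCoeff_mul (memS_id n).1.1 hf0.1.1.1]
      refine Finset.sum_eq_zero fun p hp => ?_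
      -- both indices on the antidiagonal are at most `i`
      have hp2 : p.2 < n := by
        have := Finset.HasAntidiagonal.mem_antidiagonal.1 hp
        omega
      rw [hcoef f hf0 p.2 hp2, mul_zero]
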